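/- Let Ω ⊆ ℂ be a domain, let p ∈ Ω, and let f be holomorphic on Ω \ {p} with a pole at p, i.e. there exist an integer n ≥ 1 and a holomorphic non-vanishing function h on a neighborhood of p such that 1/f(z) = (z − p)^n · h(z) near p. Then there exists an open neighborhood U of p, with U ⊆ Ω, such that for every subset A ⊆ U \ {p} one has dim_N A = dim_N f(A) (with the Euclidean metric on both A and f(A)). -/

import Mathlib

open Set Metric

/-- `S` is `D`-bounded with respect to the distance function `d`:
every two points of `S` are at distance at most `D`. -/
def IsBoundedBy {α : Type*} (d : α → α → ℝ) (S : Set α) (D : ℝ) : Prop :=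
  ∀ x ∈ S, ∀ y ∈ S, d x y ≤ D

/-- The Nagata (Assouad–Nagata) dimension of the set `X ⊆ α` with respect to the
distance function `d`, as an element of `ℕ∞`: the infimum of all `n : ℕ` such that
there is a constant `c > 0` so that for every `s > 0` the set `X` admits a cover by
subsets of diameter at most `c * s` such that every subset of `X` of diameter at
most `s` meets at most `n + 1` members of the cover. -/
noncomputable def nagataDimWith {α : Type*} (d : α → α → ℝ) (X : Set α) : ℕ∞ :=
  sInf {N : ℕ∞ | ∃ n : ℕ, N = (n : ℕ∞) ∧ ∃ c : ℝ, 0 < c ∧ ∀ s : ℝ, 0 < s →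
    ∃ B : Set (Set α), (∀ b ∈ B, b ⊆ X) ∧ X ⊆ ⋃₀ B ∧
      (∀ b ∈ B, IsBoundedBy d b (c * s)) ∧
      ∀ T ⊆ X, IsBoundedBy d T s → {b ∈ B | (T ∩ b).Nonempty}.encard ≤ (n : ℕ∞) + 1}

/-- The Nagata dimension of a subset of a metric space. -/
noncomputable def nagataDim {α : Type*} [PseudoMetricSpace α] (X : Set α) : ℕ∞ :=
  nagataDimWith dist X

/-!
Near `p` a nonconstant meromorphic function is, up to an additive constant, `φ ^ n` with `n ≠ 0` an
integer and `φ` holomorphic with a simple zero at `p`. The map `φ` is bi-Lipschitz near `p`, so what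
remains is that `z ↦ z ^ n` preserves the Nagata dimension of every subset of `ℂ \ {0}`. It is not
bi-Lipschitz, but by homogeneity it is a similarity up to a fixed factor on each ball
`ball w (δ * ‖w‖)`, with a ratio depending on `w`. After cutting the plane into finitely many cones
around `0` and these into annuli, each piece lies in such a ball. Two annuli that are not adjacent
are separated by a fixed multiple of their distance from `0`, which allows the uniform estimates on
the annuli to be put together; the finitely many cones are handled by the union theorem.
-/

open Relation
open scoped Topology

variable {α β κ ι : Type*}

section Colorings

variable [PseudoMetricSpace α] [PseudoMetricSpace β]

/-- One step of a monochromatic `s`-chain in `A`. -/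
def ChainStep (χ : α → κ) (s : ℝ) (A : Set α) (x y : α) : Prop :=
  x ∈ A ∧ y ∈ A ∧ χ x = χ y ∧ dist x y ≤ s

/-- A coloring of `A` at scale `s` with constant `D`: the end points of every monochromatic
`s`-chain in `A` are at distance at most `D`, so the monochromatic `s`-components of `A` have
diameter at most `D`. -/
def IsChainColoring (χ : α → κ) (s D : ℝ) (A : Set α) : Prop :=
  ∀ x ∈ A, ∀ y, ReflTransGen (ChainStep χ s A) x y → dist x y ≤ D

/-- The cover demanded by the definition of the Nagata dimension at scale `s`: its members have
diameter at most `D`, and its `s`-multiplicity is at most `n + 1`. -/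
def HasNagataCover (n : ℕ) (s D : ℝ) (A : Set α) : Prop :=
  ∃ B : Set (Set α), (∀ b ∈ B, b ⊆ A) ∧ A ⊆ ⋃₀ B ∧ (∀ b ∈ B, IsBoundedBy dist b D) ∧
    ∀ T ⊆ A, IsBoundedBy dist T s → {b ∈ B | (T ∩ b).Nonempty}.encard ≤ (n : ℕ∞) + 1

/-- Nagata dimension at most `n` with constant `c`, in terms of colorings: this is the form in
which unions and changes of metric are easy to handle. -/
def NagataColorableWith (c : ℝ) (n : ℕ) (A : Set α) : Prop :=
  ∀ s > 0, ∃ χ : α → Fin (n + 1), IsChainColoring χ s (c * s) A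

/-- Nagata dimension at most `n`, in terms of colorings. -/
def NagataColorable (n : ℕ) (A : Set α) : Prop :=
  ∃ c > 0, NagataColorableWith c n A

variable {χ : α → κ} {s D : ℝ} {n : ℕ} {A B : Set α} {x y : α}

instance : Std.Symm (ChainStep χ s A) :=
  ⟨fun x y ⟨hx, hy, hcol, hdist⟩ => ⟨hy, hx, hcol.symm, dist_comm x y ▸ hdist⟩⟩

lemma mem_of_reflTransGen_chainStep (hx : x ∈ A) (h : ReflTransGen (ChainStep χ s A) x y) :
    y ∈ A := by
  cases h with
  | refl => exact hx
  | tail _ hstep => exact hstep.2.1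

/-! ### Colorings and covers -/

lemma IsChainColoring.hasNagataCover {χ : α → Fin (n + 1)} (h : IsChainColoring χ s D A) :
    HasNagataCover n s (2 * D) A := by
  set component : α → Set α := fun x => {y | y ∈ A ∧ ReflTransGen (ChainStep χ s A) x y}
  refine ⟨component '' A, ?_, fun x hx => ⟨_, mem_image_of_mem _ hx, hx, .refl⟩, ?_, ?_⟩
  · rintro _ ⟨x, -, rfl⟩ y hy
    exact hy.1
  · rintro _ ⟨x, hx, rfl⟩ y hy z hz
    linarith [dist_triangle_left y z x, h x hx y hy.2, h x hx z hz.2]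
  · intro T hTA hT
    -- A component meeting `T` is determined by its color, as `T` has diameter at most `s`.
    have hsub : {b ∈ component '' A | (T ∩ b).Nonempty} ⊆
        range fun j => {y | y ∈ A ∧ ∃ t ∈ T, χ t = j ∧ ReflTransGen (ChainStep χ s A) t y} := by
      rintro _ ⟨⟨x, -, rfl⟩, t, htT, htA, hxt⟩
      refine ⟨χ t, Set.ext fun y => and_congr_right fun _ => ⟨?_, fun hxy =>
        ⟨t, htT, rfl, (symm hxt).trans hxy⟩⟩⟩
      rintro ⟨u, huT, hut, huy⟩
      exact hxt.trans (.head ⟨htA, hTA huT, hut.symm, hT t htT u huT⟩ huy)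
    calc _ ≤ (range _).encard := encard_le_encard hsub
      _ ≤ (univ : Set (Fin (n + 1))).encard := image_univ ▸ encard_image_le _ _
      _ = (n : ℕ∞) + 1 := by simp [encard_univ]

-- If every `j` fails, then `n + 1` members of the cover that do not contain `x`, and one that does,
-- all meet the same ball around `x`.
lemma exists_infDist_notMem_Ioo {B : Set (Set α)} {r : ℝ} (hr : 0 < r) (hBA : ∀ b ∈ B, b ⊆ A)
    (hAB : A ⊆ ⋃₀ B) (hmult : ∀ T ⊆ A, IsBoundedBy dist T (2 * ((n + 1) * r)) →
      {b ∈ B | (T ∩ b).Nonempty}.encard ≤ (n : ℕ∞) + 1) (hx : x ∈ A) :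
    ∃ j : Fin (n + 1), ∀ b ∈ B, infDist x b ∉ Ioo (j * r) ((j + 1) * r) := by
  by_contra! hcon
  choose b hbB hb using hcon
  obtain ⟨b₀, hb₀B, hxb₀⟩ := hAB hx
  have hmono : StrictMono fun j => infDist x (b j) := fun i j hij => by
    have hij' : ((i : ℕ) : ℝ) + 1 ≤ (j : ℕ) := mod_cast hij
    calc infDist x (b i) < (i + 1) * r := (hb i).2
      _ ≤ j * r := by gcongr
      _ < infDist x (b j) := (hb j).1
  have hinj : Function.Injective b := Function.Injective.of_comp (f := infDist x) hmono.injective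
  have hpos (j : Fin (n + 1)) : 0 < infDist x (b j) := lt_of_le_of_lt (by positivity) (hb j).1
  have hb₀ : b₀ ∉ range b := by
    rintro ⟨j, rfl⟩
    exact (hpos j).ne' (infDist_zero_of_mem hxb₀)
  have hmeet : insert b₀ (range b) ⊆
      {b ∈ B | ((A ∩ closedBall x ((n + 1) * r)) ∩ b).Nonempty} := by
    rintro _ (rfl | ⟨j, rfl⟩)
    · exact ⟨hb₀B, x, ⟨hx, mem_closedBall_self (by positivity)⟩, hxb₀⟩
    · have hne : (b j).Nonempty := nonempty_iff_ne_empty.2 fun h => by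
        simpa [h] using hpos j
      have hj : ((j : ℕ) : ℝ) ≤ n := mod_cast Nat.lt_succ_iff.1 j.2
      obtain ⟨y, hy, hxy⟩ := (infDist_lt_iff hne).1 (hb j).2
      refine ⟨hbB j, y, ⟨hBA _ (hbB j) hy, mem_closedBall'.2 (hxy.le.trans ?_)⟩, hy⟩
      gcongr
  have hcard := (encard_le_encard hmeet).trans <| hmult _ inter_subset_left fun y hy z hz => by
    linarith [dist_triangle_right y z x, mem_closedBall.1 hy.2, mem_closedBall.1 hz.2]
  rw [encard_insert_of_notMem hb₀, ← image_univ, hinj.encard_image, encard_univ,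
    ENat.card_eq_coe_fintype_card, Fintype.card_fin] at hcard
  norm_cast at hcard
  omega

lemma infDist_le_of_reflTransGen {B : Set (Set α)} {b : Set α} {r : ℝ} {χ : α → Fin (n + 1)}
    (hsr : s < r) (hχ : ∀ y ∈ A, ∀ b ∈ B, infDist y b ∉ Ioo (χ y * r) ((χ y + 1) * r))
    (hr : 0 ≤ r) (hb : b ∈ B) (hxb : x ∈ b) (h : ReflTransGen (ChainStep χ s A) x y) :
    infDist y b ≤ χ y * r := by
  induction h with
  | refl => rw [infDist_zero_of_mem hxb]; positivity
  | @tail y z _ hyz ih =>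
    obtain ⟨-, hz, hcol, hdist⟩ := hyz
    by_contra! hlt
    rw [hcol] at ih
    refine hχ z hz b hb ⟨hlt, ?_⟩
    linarith [infDist_le_infDist_add_dist (s := b) (x := z) (y := y), dist_comm y z]

lemma HasNagataCover.exists_isChainColoring {r : ℝ} (hr : 0 < r) (hsr : s < r)
    (h : HasNagataCover n (2 * ((n + 1) * r)) D A) :
    ∃ χ : α → Fin (n + 1), IsChainColoring χ s (D + (n + 1) * r) A := by
  obtain ⟨B, hBA, hAB, hBD, hmult⟩ := h
  have hex (x : α) : ∃ j : Fin (n + 1), x ∈ A →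
      ∀ b ∈ B, infDist x b ∉ Ioo (j * r) ((j + 1) * r) := by
    by_cases hx : x ∈ A
    · exact (exists_infDist_notMem_Ioo hr hBA hAB hmult hx).imp fun _ hj _ => hj
    · exact ⟨0, fun h => absurd h hx⟩
  choose χ hχ using hex
  refine ⟨χ, fun x hx y hxy => ?_⟩
  obtain ⟨b, hb, hxb⟩ := hAB hx
  have hlt : infDist y b < (n + 1) * r := by
    have hle : ((χ y : ℕ) : ℝ) ≤ n := mod_cast Nat.lt_succ_iff.1 (χ y).2
    have := infDist_le_of_reflTransGen hsr hχ hr.le hb hxb hxy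
    nlinarith
  obtain ⟨z, hz, hyz⟩ := (infDist_lt_iff ⟨x, hxb⟩).1 hlt
  linarith [dist_triangle_right x y z, hBD b hb x hxb z hz]

lemma nagataColorable_iff_hasNagataCover :
    NagataColorable n A ↔ ∃ c : ℝ, 0 < c ∧ ∀ s : ℝ, 0 < s → HasNagataCover n s (c * s) A := by
  constructor
  · rintro ⟨c, hc, h⟩
    refine ⟨2 * c, by positivity, fun s hs => ?_⟩
    obtain ⟨χ, hχ⟩ := h s hs
    exact mul_assoc 2 c s ▸ hχ.hasNagataCover
  · rintro ⟨c, hc, h⟩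
    refine ⟨c * (2 * ((n + 1) * 2)) + (n + 1) * 2, by positivity, fun s hs => ?_⟩
    obtain ⟨χ, hχ⟩ := (h (2 * ((n + 1) * (2 * s))) (by positivity)).exists_isChainColoring
      (by positivity) (by linarith : s < 2 * s)
    refine ⟨χ, ?_⟩
    convert hχ using 1
    ring

lemma nagataDim_eq_of_nagataColorable_iff {A : Set α} {B : Set β}
    (h : ∀ n, NagataColorable n A ↔ NagataColorable n B) : nagataDim A = nagataDim B :=
  congrArg sInf <| Set.ext fun _ => exists_congr fun n => and_congr_right fun _ =>
    nagataColorable_iff_hasNagataCover.symm.trans <| (h n).trans nagataColorable_iff_hasNagataCover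

/-! ### Change of metric and unions -/

lemma IsChainColoring.comap {s' D' : ℝ} {B : Set β} {g : β → α} (h : IsChainColoring χ s D A)
    (hg : MapsTo g B A) (hs : ∀ x ∈ B, ∀ y ∈ B, dist x y ≤ s' → dist (g x) (g y) ≤ s)
    (hD : ∀ x ∈ B, ∀ y ∈ B, dist (g x) (g y) ≤ D → dist x y ≤ D') :
    IsChainColoring (χ ∘ g) s' D' B := fun x hx y hxy =>
  hD x hx y (mem_of_reflTransGen_chainStep hx hxy) <| h (g x) (hg hx) (g y) <|
    hxy.lift g fun a b ⟨ha, hb, hcol, hdist⟩ => ⟨hg ha, hg hb, hcol, hs a ha b hb hdist⟩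

lemma IsChainColoring.reflTransGen_or_exists [DecidablePred (· ∈ B)] {ψ : α → κ} (hs : 0 ≤ s)
    (hD : 0 ≤ D) (hχ : IsChainColoring χ s D A) (hx : x ∈ A ∪ B)
    (h : ReflTransGen (ChainStep (B.piecewise ψ χ) s (A ∪ B)) x y) :
    (x ∈ A ∧ y ∉ B ∧ ReflTransGen (ChainStep χ s A) x y) ∨
      ∃ b ∈ B, dist x b ≤ D + s ∧ ReflTransGen (ChainStep (B.piecewise ψ χ) s (A ∪ B)) b y := by
  induction h with
  | refl =>
    by_cases hxB : x ∈ B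
    · exact .inr ⟨x, hxB, by rw [dist_self]; positivity, .refl⟩
    · exact .inl ⟨hx.resolve_right hxB, hxB, .refl⟩
  | @tail y z _ hyz ih =>
    rcases ih with ⟨hxA, hyB, hxy⟩ | ⟨b, hb, hxb, hby⟩
    · obtain ⟨hy, hz, hcol, hdist⟩ := hyz
      by_cases hzB : z ∈ B
      · exact .inr ⟨z, hzB, by linarith [dist_triangle x y z, hχ x hxA y hxy], .refl⟩
      · refine .inl ⟨hxA, hzB, hxy.tail ⟨hy.resolve_right hyB, hz.resolve_right hzB, ?_, hdist⟩⟩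
        simpa only [piecewise_eq_of_notMem _ _ _ hyB, piecewise_eq_of_notMem _ _ _ hzB] using hcol
    · exact .inr ⟨b, hb, hxb, hby.tail hyz⟩

-- The witness `b` is the last point of `B` on the chain: excursions from `B` into `A` have length
-- at most `D + 2 * s`, so they can be short-cut.
lemma IsChainColoring.exists_reflTransGen_of_mem [DecidablePred (· ∈ B)] {ψ : α → κ} (hs : 0 ≤ s)
    (hD : 0 ≤ D) (hχ : IsChainColoring χ s D A) (hx : x ∈ B)
    (h : ReflTransGen (ChainStep (B.piecewise ψ χ) s (A ∪ B)) x y) :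
    ∃ b ∈ B, ReflTransGen (ChainStep ψ (D + 2 * s) B) x b ∧ dist b y ≤ D + s := by
  suffices ∃ b ∈ B, ReflTransGen (ChainStep ψ (D + 2 * s) B) x b ∧ ψ b = B.piecewise ψ χ y ∧
      (y = b ∨ y ∉ B ∧ ∃ a ∈ A, dist b a ≤ s ∧ ReflTransGen (ChainStep χ s A) a y) by
    obtain ⟨b, hb, hxb, -, rfl | ⟨-, a, ha, hba, hay⟩⟩ := this
    · exact ⟨y, hb, hxb, by rw [dist_self]; positivity⟩
    · exact ⟨b, hb, hxb, by linarith [dist_triangle b a y, hχ a ha y hay]⟩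
  induction h with
  | refl => exact ⟨x, hx, .refl, (piecewise_eq_of_mem _ _ _ hx).symm, .inl rfl⟩
  | @tail y z _ hyz ih =>
    obtain ⟨hy, hz, hcol, hdist⟩ := hyz
    obtain ⟨b, hb, hxb, hby, htail⟩ := ih
    have hbz : ψ b = B.piecewise ψ χ z := hby.trans hcol
    by_cases hzB : z ∈ B
    · have hdist' : dist b z ≤ D + 2 * s := by
        rcases htail with rfl | ⟨-, a, ha, hba, hay⟩
        · linarith
        · linarith [dist_triangle4 b a y z, hχ a ha y hay]
      rw [piecewise_eq_of_mem _ _ _ hzB] at hbz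
      exact ⟨z, hzB, hxb.tail ⟨hb, hzB, hbz, hdist'⟩, (piecewise_eq_of_mem _ _ _ hzB).symm,
        .inl rfl⟩
    · refine ⟨b, hb, hxb, hbz, .inr ⟨hzB, ?_⟩⟩
      rcases htail with rfl | ⟨hyB, a, ha, hba, hay⟩
      · exact ⟨z, hz.resolve_right hzB, hdist, .refl⟩
      · rw [piecewise_eq_of_notMem _ _ _ hyB, piecewise_eq_of_notMem _ _ _ hzB] at hcol
        exact ⟨a, ha, hba, hay.tail ⟨hy.resolve_right hyB, hz.resolve_right hzB, hcol, hdist⟩⟩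

lemma IsChainColoring.union [DecidablePred (· ∈ B)] {ψ : α → κ} {D' : ℝ} (hs : 0 ≤ s) (hD : 0 ≤ D)
    (hD' : 0 ≤ D') (hχ : IsChainColoring χ s D A) (hψ : IsChainColoring ψ (D + 2 * s) D' B) :
    IsChainColoring (B.piecewise ψ χ) s (2 * (D + s) + D') (A ∪ B) := by
  intro x hx y hxy
  rcases hχ.reflTransGen_or_exists hs hD hx hxy with ⟨hxA, -, hxy⟩ | ⟨b, hb, hxb, hby⟩
  · linarith [hχ x hxA y hxy]
  · obtain ⟨b', -, hbb', hb'y⟩ := hχ.exists_reflTransGen_of_mem hs hD hb hby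
    linarith [dist_triangle4 x b b' y, hψ b hb b' hbb']

lemma IsBoundedBy.isChainColoring (h : IsBoundedBy dist A D) (χ : α → κ) (s : ℝ) :
    IsChainColoring χ s D A := fun x hx y hxy =>
  h x hx y (mem_of_reflTransGen_chainStep hx hxy)

lemma NagataColorableWith.comap {a b c : ℝ} {B : Set β} {g : β → α}
    (h : NagataColorableWith c n A) (hg : MapsTo g B A) (ha : 0 < a) (hb : 0 ≤ b)
    (hlip : ∀ x ∈ B, ∀ y ∈ B, dist (g x) (g y) ≤ a * dist x y)
    (hexp : ∀ x ∈ B, ∀ y ∈ B, dist x y ≤ b * dist (g x) (g y)) :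
    NagataColorableWith (b * a * c) n B := by
  intro s hs
  obtain ⟨χ, hχ⟩ := h (a * s) (by positivity)
  refine ⟨χ ∘ g, hχ.comap hg (fun x hx y hy hxy => (hlip x hx y hy).trans (by gcongr)) ?_⟩
  intro x hx y hy hxy
  calc dist x y ≤ b * dist (g x) (g y) := hexp x hx y hy
    _ ≤ b * (c * (a * s)) := by gcongr
    _ = b * a * c * s := by ring

lemma NagataColorableWith.mono {c : ℝ} (h : NagataColorableWith c n A) (hBA : B ⊆ A) :
    NagataColorableWith c n B := by
  simpa using h.comap (g := id) hBA one_pos zero_le_one (by simp) (by simp)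

lemma nagataColorableWith_empty (c : ℝ) (n : ℕ) : NagataColorableWith c n (∅ : Set α) :=
  fun _ _ => ⟨fun _ => 0, fun _ hx => absurd hx (notMem_empty _)⟩

namespace NagataColorable

lemma mono (h : NagataColorable n A) (hBA : B ⊆ A) : NagataColorable n B :=
  let ⟨c, hc, h⟩ := h
  ⟨c, hc, h.mono hBA⟩

lemma union (hA : NagataColorable n A) (hB : NagataColorable n B) :
    NagataColorable n (A ∪ B) := by
  classical
  obtain ⟨c, hc, hA⟩ := hA
  obtain ⟨c', hc', hB⟩ := hB
  refine ⟨2 * (c + 1) + c' * (c + 2), by positivity, fun s hs => ?_⟩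
  obtain ⟨χ, hχ⟩ := hA s hs
  obtain ⟨ψ, hψ⟩ := hB (c * s + 2 * s) (by positivity)
  refine ⟨B.piecewise ψ χ, ?_⟩
  convert hχ.union hs.le (by positivity) (by positivity) hψ using 1
  ring

lemma empty (n : ℕ) : NagataColorable n (∅ : Set α) :=
  ⟨1, one_pos, nagataColorableWith_empty 1 n⟩

lemma sUnion {S : Set (Set α)} (hS : S.Finite) (h : ∀ A ∈ S, NagataColorable n A) :
    NagataColorable n (⋃₀ S) := by
  induction S, hS using Set.Finite.induction_on with
  | empty =>
    rw [sUnion_empty]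
    exact empty n
  | @insert A S _ _ ih =>
    rw [sUnion_insert]
    exact (h A (mem_insert _ _)).union (ih fun B hB => h B (mem_insert_of_mem _ hB))

end NagataColorable

end Colorings

section Annuli

variable [PseudoMetricSpace α] {n : ℕ} {A : Set α} {o : α} {c τ : ℝ}

lemma NagataColorable.of_separated_levels {ℓ : α → ι} {η : ℝ} (hη : 0 < η) (hc : 0 < c)
    (hsep : ∀ x ∈ A, ∀ y ∈ A, ℓ x ≠ ℓ y → η * dist x o ≤ dist x y)
    (hlevel : ∀ k, NagataColorableWith c n {x ∈ A | ℓ x = k}) : NagataColorable n A := by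
  classical
  refine ⟨2 * (c + 1) + 2 / η, by positivity, fun s hs => ?_⟩
  choose χ hχ using fun k => hlevel k s hs
  set far : Set α := {x ∈ A | s < η * dist x o}
  set near : Set α := {x ∈ A | η * dist x o ≤ s}
  have hfar : IsChainColoring (fun x => χ (ℓ x) x) s (c * s) far := by
    intro x hx y hxy
    suffices ℓ x = ℓ y ∧ ReflTransGen (ChainStep (χ (ℓ x)) s {y ∈ A | ℓ y = ℓ x}) x y from
      hχ (ℓ x) x ⟨hx.1, rfl⟩ y this.2
    induction hxy with
    | refl => exact ⟨rfl, .refl⟩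
    | @tail y z _ hyz ih =>
      obtain ⟨hy, hz, hcol, hdist⟩ := hyz
      obtain ⟨hℓ, hchain⟩ := ih
      have hℓ' : ℓ y = ℓ z := by
        by_contra hne
        linarith [hsep y hy.1 z hz.1 hne, hy.2]
      refine ⟨hℓ.trans hℓ', hchain.tail ⟨⟨hy.1, hℓ.symm⟩, ⟨hz.1, (hℓ.trans hℓ').symm⟩, ?_, hdist⟩⟩
      simpa only [← hℓ', ← hℓ] using hcol
  have hnear : IsBoundedBy dist near (2 / η * s) := fun x hx y hy => by
    calc dist x y ≤ dist x o + dist y o := dist_triangle_right x y o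
      _ ≤ s / η + s / η := add_le_add ((le_div_iff₀' hη).2 hx.2) ((le_div_iff₀' hη).2 hy.2)
      _ = 2 / η * s := by ring
  have hA : far ∪ near = A := Set.ext fun x => ⟨fun hx => hx.elim And.left And.left,
    fun hx => (lt_or_ge s _).imp (fun h => ⟨hx, h⟩) fun h => ⟨hx, h⟩⟩
  have hunion := hfar.union hs.le (by positivity) (by positivity)
    (hnear.isChainColoring (fun _ => (0 : Fin (n + 1))) (c * s + 2 * s))
  rw [hA] at hunion
  exact ⟨_, (by ring : 2 * (c * s + s) + 2 / η * s = (2 * (c + 1) + 2 / η) * s) ▸ hunion⟩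

lemma one_sub_exp_neg_mul_dist_le {x y : α} (hτ : 0 ≤ τ) (hx : 0 < dist x o) (hy : 0 < dist y o)
    (h : τ ≤ |Real.log (dist x o) - Real.log (dist y o)|) :
    (1 - Real.exp (-τ)) * dist x o ≤ dist x y := by
  have hexp : Real.exp (-τ) ≤ 1 := Real.exp_le_one_iff.2 (neg_nonpos.2 hτ)
  have key {a b : ℝ} (ha : 0 < a) (hb : 0 < b) (hab : τ ≤ Real.log a - Real.log b) :
      b ≤ Real.exp (-τ) * a := by
    rw [← Real.log_le_log_iff hb (by positivity), Real.log_mul (Real.exp_ne_zero _) ha.ne',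
      Real.log_exp]
    linarith
  rcases le_abs'.1 h with h | h
  · have hxy := key hy hx (by linarith)
    have hle : dist x o ≤ dist y o := hxy.trans (mul_le_of_le_one_left hy.le hexp)
    linarith [mul_le_mul_of_nonneg_left hle (sub_nonneg.2 hexp), dist_triangle_left y o x]
  · have := key hx hy h
    linarith [dist_triangle x y o]

lemma abs_log_sub_log_lt_of_floor_eq {a b : ℝ} (hτ : 0 < τ)
    (h : ⌊Real.log a / τ⌋ = ⌊Real.log b / τ⌋) : |Real.log a - Real.log b| < τ := by
  have := Int.abs_sub_lt_one_of_floor_eq_floor h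
  rwa [← sub_div, abs_div, abs_of_pos hτ, div_lt_one hτ] at this

lemma le_abs_log_sub_log_of_floor_add_two_le {a b : ℝ} (hτ : 0 < τ)
    (h : ⌊Real.log a / τ⌋ + 2 ≤ ⌊Real.log b / τ⌋) : τ ≤ |Real.log b - Real.log a| := by
  refine le_trans ?_ (le_abs_self _)
  rw [← one_le_div hτ, sub_div]
  have : ((⌊Real.log a / τ⌋ : ℝ) + 2) ≤ ⌊Real.log b / τ⌋ := mod_cast h
  linarith [Int.lt_floor_add_one (Real.log a / τ), Int.floor_le (Real.log b / τ)]

-- Annuli with indices of equal parity are separated relative to their distance from `o`.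
lemma NagataColorable.of_annuli (hτ : 0 < τ) (hc : 0 < c) (hA : ∀ x ∈ A, 0 < dist x o)
    (h : ∀ x₀ ∈ A, NagataColorableWith c n
      {x ∈ A | |Real.log (dist x o) - Real.log (dist x₀ o)| < τ}) : NagataColorable n A := by
  set ℓ : α → ℤ := fun x => ⌊Real.log (dist x o) / τ⌋
  have of_parity (S : Set α) (hSA : S ⊆ A)
      (hgap : ∀ x ∈ S, ∀ y ∈ S, ℓ x ≠ ℓ y → ℓ x + 2 ≤ ℓ y ∨ ℓ y + 2 ≤ ℓ x) :
      NagataColorable n S := by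
    have hη : 0 < 1 - Real.exp (-τ) := sub_pos.2 (Real.exp_lt_one_iff.2 (neg_neg_iff_pos.2 hτ))
    refine of_separated_levels (ℓ := ℓ) (o := o) hη hc (fun x hx y hy hne => ?_) fun k => ?_
    · refine one_sub_exp_neg_mul_dist_le hτ.le (hA x (hSA hx)) (hA y (hSA hy)) ?_
      rcases hgap x hx y hy hne with hxy | hxy
      · exact abs_sub_comm (Real.log (dist x o)) _ ▸ le_abs_log_sub_log_of_floor_add_two_le hτ hxy
      · exact le_abs_log_sub_log_of_floor_add_two_le hτ hxy
    · rcases {x ∈ S | ℓ x = k}.eq_empty_or_nonempty with hempty | ⟨x₀, hx₀, hk⟩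
      · rw [hempty]
        exact nagataColorableWith_empty c n
      · exact (h x₀ (hSA hx₀)).mono fun x ⟨hx, hxk⟩ =>
          ⟨hSA hx, abs_log_sub_log_lt_of_floor_eq hτ (hxk.trans hk.symm)⟩
  refine ((of_parity {x ∈ A | Even (ℓ x)} (sep_subset _ _) ?_).union
    (of_parity {x ∈ A | Odd (ℓ x)} (sep_subset _ _) ?_)).mono fun x hx => ?_
  · rintro x ⟨-, a, ha⟩ y ⟨-, b, hb⟩ hne
    omega
  · rintro x ⟨-, a, ha⟩ y ⟨-, b, hb⟩ hne
    omega
  · exact (Int.even_or_odd (ℓ x)).imp (fun he => ⟨hx, he⟩) fun ho => ⟨hx, ho⟩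

end Annuli

section QuasiSimilarity

variable [PseudoMetricSpace α] [PseudoMetricSpace β] {n : ℕ} {A B : Set α} {f : α → β} {c K : ℝ}

/-- A quasi-similarity with constant `K`: up to the factor `K`, the map scales all distances in `A`
by one and the same ratio `r`. The ratio is not part of the data, so that a family of maps of
very different scales can share the constant `K`. -/
def IsQuasiSimilarityOn (K : ℝ) (f : α → β) (A : Set α) : Prop :=
  ∃ r > 0, ∀ x ∈ A, ∀ y ∈ A, r * dist x y ≤ dist (f x) (f y) ∧ dist (f x) (f y) ≤ K * r * dist x y

namespace IsQuasiSimilarityOn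

lemma mono (hf : IsQuasiSimilarityOn K f A) (hBA : B ⊆ A) : IsQuasiSimilarityOn K f B :=
  let ⟨r, hr, h⟩ := hf
  ⟨r, hr, fun x hx y hy => h x (hBA hx) y (hBA hy)⟩

lemma nagataColorableWith (hf : IsQuasiSimilarityOn K f A) (hK : 0 < K)
    (h : NagataColorableWith c n (f '' A)) : NagataColorableWith (K * c) n A := by
  obtain ⟨r, hr, hf⟩ := hf
  have := h.comap (mapsTo_image f A) (mul_pos hK hr) (inv_pos.2 hr).le
    (fun x hx y hy => (hf x hx y hy).2) fun x hx y hy => (le_inv_mul_iff₀ hr).2 (hf x hx y hy).1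
  rwa [mul_left_comm r⁻¹, inv_mul_cancel₀ hr.ne', mul_one] at this

lemma nagataColorableWith_image (hf : IsQuasiSimilarityOn K f A) (hK : 0 < K)
    (h : NagataColorableWith c n A) : NagataColorableWith (K * c) n (f '' A) := by
  rcases A.eq_empty_or_nonempty with rfl | ⟨x₀, -⟩
  · rw [image_empty]
    exact nagataColorableWith_empty _ n
  have : Nonempty α := ⟨x₀⟩
  obtain ⟨r, hr, hf⟩ := hf
  choose! g hgA hfg using fun (y : β) (hy : y ∈ f '' A) => hy
  have := h.comap (fun y => hgA y) (inv_pos.2 hr) (mul_pos hK hr).le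
    (fun x hx y hy => by
      simpa only [hfg x hx, hfg y hy] using (le_inv_mul_iff₀ hr).2 (hf _ (hgA x hx) _ (hgA y hy)).1)
    fun x hx y hy => by simpa only [hfg x hx, hfg y hy] using (hf _ (hgA x hx) _ (hgA y hy)).2
  rwa [mul_assoc K, mul_inv_cancel₀ hr.ne', mul_one] at this

lemma nagataColorable_image_iff (hf : IsQuasiSimilarityOn K f A) (hK : 0 < K) :
    NagataColorable n (f '' A) ↔ NagataColorable n A :=
  ⟨fun ⟨c, hc, h⟩ => ⟨K * c, mul_pos hK hc, hf.nagataColorableWith hK h⟩,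
    fun ⟨c, hc, h⟩ => ⟨K * c, mul_pos hK hc, hf.nagataColorableWith_image hK h⟩⟩

lemma nagataDim_image (hf : IsQuasiSimilarityOn K f A) (hK : 0 < K) :
    nagataDim (f '' A) = nagataDim A :=
  nagataDim_eq_of_nagataColorable_iff fun _ => hf.nagataColorable_image_iff hK

end IsQuasiSimilarityOn

lemma exists_isQuasiSimilarityOn_of_hasStrictDerivAt {𝕜 E : Type*} [NontriviallyNormedField 𝕜]
    [NormedAddCommGroup E] [NormedSpace 𝕜 E] {f : 𝕜 → E} {f' : E} {p : 𝕜}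
    (hf : HasStrictDerivAt f f' p) (hf' : f' ≠ 0) : ∃ U ∈ 𝓝 p, IsQuasiSimilarityOn 3 f U := by
  have hr : 0 < ‖f'‖ / 2 := half_pos (norm_pos_iff.2 hf')
  have hclose : ∀ᶠ q in 𝓝 p ×ˢ 𝓝 p,
      ‖f q.1 - f q.2 - (q.1 - q.2) • f'‖ ≤ ‖f'‖ / 2 * ‖q.1 - q.2‖ := by
    simpa [nhds_prod_eq] using hf.isLittleO.def hr
  obtain ⟨U, hU, hclose⟩ := Filter.eventually_prod_self_iff
    (r := fun x y => ‖f x - f y - (x - y) • f'‖ ≤ ‖f'‖ / 2 * ‖x - y‖) |>.1 hclose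
  refine ⟨U, hU, ‖f'‖ / 2, hr, fun x hx y hy => ?_⟩
  have hxy := hclose x hx y hy
  have hnorm : ‖(x - y) • f'‖ = ‖f'‖ * ‖x - y‖ := by rw [norm_smul, mul_comm]
  rw [dist_eq_norm, dist_eq_norm]
  constructor
  · linarith [norm_le_norm_add_norm_sub (f x - f y) ((x - y) • f')]
  · linarith [norm_le_norm_add_norm_sub' (f x - f y) ((x - y) • f')]

end QuasiSimilarity

section Powers

open NormedSpace

lemma exists_isQuasiSimilarityOn_zpow_ball (𝕜 : Type*) [NontriviallyNormedField 𝕜] [CharZero 𝕜]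
    {n : ℤ} (hn : n ≠ 0) : ∃ δ > 0, ∀ w : 𝕜, w ≠ 0 →
      IsQuasiSimilarityOn 3 (fun z : 𝕜 => z ^ n) (ball w (δ * ‖w‖)) := by
  obtain ⟨U, hU, r, hr, h⟩ := exists_isQuasiSimilarityOn_of_hasStrictDerivAt
    (hasStrictDerivAt_zpow n (1 : 𝕜) (.inl one_ne_zero)) (by simpa using hn)
  obtain ⟨δ, hδ, hball⟩ := Metric.mem_nhds_iff.1 hU
  refine ⟨δ, hδ, fun w hw => ⟨r * (‖w‖ ^ n / ‖w‖), by positivity, fun x hx y hy => ?_⟩⟩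
  have hw' : 0 < ‖w‖ := norm_pos_iff.2 hw
  have hdiv {z : 𝕜} (hz : z ∈ ball w (δ * ‖w‖)) : z / w ∈ U := by
    refine hball ?_
    rwa [mem_ball, dist_eq_norm, ← div_self hw, ← sub_div, norm_div, div_lt_iff₀ hw',
      ← dist_eq_norm]
  have hbase : dist x y = ‖w‖ * dist (x / w) (y / w) := by
    rw [dist_eq_norm, dist_eq_norm, ← sub_div, norm_div, mul_div_cancel₀ _ hw'.ne']
  have hpow : dist (x ^ n) (y ^ n) = ‖w‖ ^ n * dist ((x / w) ^ n) ((y / w) ^ n) := by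
    rw [dist_eq_norm, dist_eq_norm, ← norm_zpow, ← norm_mul, mul_sub, ← mul_zpow, ← mul_zpow,
      mul_div_cancel₀ _ hw, mul_div_cancel₀ _ hw]
  obtain ⟨hlower, hupper⟩ := h _ (hdiv hx) _ (hdiv hy)
  rw [hpow, hbase]
  constructor
  · calc r * (‖w‖ ^ n / ‖w‖) * (‖w‖ * dist (x / w) (y / w))
        = ‖w‖ ^ n * (r * dist (x / w) (y / w)) := by field_simp
      _ ≤ ‖w‖ ^ n * dist ((x / w) ^ n) ((y / w) ^ n) := by gcongr
  · calc ‖w‖ ^ n * dist ((x / w) ^ n) ((y / w) ^ n)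
        ≤ ‖w‖ ^ n * (3 * r * dist (x / w) (y / w)) := by gcongr
      _ = 3 * (r * (‖w‖ ^ n / ‖w‖)) * (‖w‖ * dist (x / w) (y / w)) := by field_simp

section Cones

variable {E : Type*} [NormedAddCommGroup E] [NormedSpace ℝ E]

lemma exists_finite_cover_dist_normalize_lt [ProperSpace E] {ε : ℝ} (hε : 0 < ε) :
    ∃ S : Set (Set E), S.Finite ∧ {0}ᶜ ⊆ ⋃₀ S ∧
      ∀ C ∈ S, ∀ x ∈ C, ∀ y ∈ C, dist (normalize x) (normalize y) < ε := by
  obtain ⟨t, -, ht, hcover⟩ := (isCompact_sphere (0 : E) 1).finite_cover_balls (half_pos hε)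
  refine ⟨(fun u => normalize ⁻¹' ball u (ε / 2)) '' t, ht.image _, fun x hx => ?_, ?_⟩
  · have hx' : normalize x ∈ sphere (0 : E) 1 := by
      rw [mem_sphere_zero_iff_norm, norm_normalize_eq_one_iff]
      exact hx
    obtain ⟨u, hu, hxu⟩ := mem_iUnion₂.1 (hcover hx')
    exact ⟨_, mem_image_of_mem _ hu, hxu⟩
  · rintro _ ⟨u, -, rfl⟩ x hx y hy
    linarith [dist_triangle_right (normalize x) (normalize y) u, mem_ball.1 hx, mem_ball.1 hy]

lemma dist_le_abs_norm_sub_norm_add (x y : E) :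
    dist x y ≤ |‖x‖ - ‖y‖| * ‖normalize x‖ + ‖y‖ * dist (normalize x) (normalize y) := by
  have hsplit : x - y = (‖x‖ - ‖y‖) • normalize x + ‖y‖ • (normalize x - normalize y) := by
    rw [sub_smul, smul_sub, norm_smul_normalize, norm_smul_normalize]
    abel
  calc dist x y = ‖(‖x‖ - ‖y‖) • normalize x + ‖y‖ • (normalize x - normalize y)‖ := by
        rw [dist_eq_norm, hsplit]
    _ ≤ _ := norm_add_le _ _
    _ = _ := by rw [norm_smul, norm_smul, Real.norm_eq_abs, norm_norm, dist_eq_norm]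

lemma abs_sub_lt_mul_of_abs_log_sub_log_lt {a b ε : ℝ} (ha : 0 < a) (hb : 0 < b) (hε : 0 < ε)
    (h : |Real.log a - Real.log b| < Real.log (1 + ε)) : |a - b| < ε * b := by
  have key {a b : ℝ} (ha : 0 < a) (hb : 0 < b) (h : Real.log a - Real.log b < Real.log (1 + ε)) :
      a < (1 + ε) * b := by
    rw [← Real.log_lt_log_iff ha (by positivity), Real.log_mul (by positivity) hb.ne']
    linarith
  obtain ⟨hlt, hgt⟩ := abs_lt.1 h
  have hab := key ha hb hgt
  have hba := key hb ha (by linarith)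
  rw [abs_lt]
  constructor <;> nlinarith

lemma dist_lt_of_dist_normalize_lt {x y : E} {δ : ℝ} (hx : x ≠ 0) (hy : y ≠ 0)
    (hdir : dist (normalize x) (normalize y) < δ / 2)
    (hnorm : |Real.log ‖x‖ - Real.log ‖y‖| < Real.log (1 + δ / 2)) : dist x y < δ * ‖y‖ := by
  have hδ : 0 < δ / 2 := dist_nonneg.trans_lt hdir
  have hy' : 0 < ‖y‖ := norm_pos_iff.2 hy
  have hnorm' := abs_sub_lt_mul_of_abs_log_sub_log_lt (norm_pos_iff.2 hx) hy' hδ hnorm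
  have hle := dist_le_abs_norm_sub_norm_add x y
  rw [norm_normalize hx, mul_one] at hle
  linarith [mul_lt_mul_of_pos_left hdir hy']

end Cones

lemma abs_log_norm_sub_log_norm_le_zpow {𝕜 : Type*} [NormedDivisionRing 𝕜] {n : ℤ} (hn : n ≠ 0)
    (x y : 𝕜) :
    |Real.log ‖x‖ - Real.log ‖y‖| ≤ |Real.log ‖x ^ n‖ - Real.log ‖y ^ n‖| := by
  have hn' : (1 : ℝ) ≤ |(n : ℝ)| := mod_cast Int.one_le_abs hn
  rw [norm_zpow, norm_zpow, Real.log_zpow, Real.log_zpow, ← mul_sub, abs_mul]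
  exact le_mul_of_one_le_left (abs_nonneg _) hn'

variable {𝕜 : Type*} [RCLike 𝕜] {d : ℕ} {n : ℤ}

lemma nagataColorable_image_zpow_iff_of_dist_normalize_lt {δ : ℝ} (hδ : 0 < δ) (hn : n ≠ 0)
    (hqs : ∀ w : 𝕜, w ≠ 0 → IsQuasiSimilarityOn 3 (fun z : 𝕜 => z ^ n) (ball w (δ * ‖w‖)))
    {C : Set 𝕜} (hC : C ⊆ {0}ᶜ)
    (hdir : ∀ x ∈ C, ∀ y ∈ C, dist (NormedSpace.normalize x) (NormedSpace.normalize y) < δ / 2) :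
    NagataColorable d ((fun z => z ^ n) '' C) ↔ NagataColorable d C := by
  set τ := Real.log (1 + δ / 2)
  have hτ : 0 < τ := Real.log_pos (by linarith)
  set annulus : 𝕜 → Set 𝕜 := fun x₀ => {x ∈ C | |Real.log (dist x 0) - Real.log (dist x₀ 0)| < τ}
  have hannulus (x₀ : 𝕜) (hx₀ : x₀ ∈ C) :
      IsQuasiSimilarityOn 3 (fun z : 𝕜 => z ^ n) (annulus x₀) := by
    refine (hqs x₀ (hC hx₀)).mono fun x ⟨hx, hlog⟩ => ?_
    rw [dist_zero_right, dist_zero_right] at hlog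
    exact dist_lt_of_dist_normalize_lt (hC hx) (hC hx₀) (hdir x hx x₀ hx₀) hlog
  constructor
  · rintro ⟨c, hc, h⟩
    exact .of_annuli hτ (mul_pos three_pos hc) (fun x hx => dist_pos.2 (hC hx)) fun x₀ hx₀ =>
      (hannulus x₀ hx₀).nagataColorableWith three_pos (h.mono (image_mono (sep_subset _ _)))
  · rintro ⟨c, hc, h⟩
    refine .of_annuli (o := 0) hτ (mul_pos three_pos hc) ?_ ?_
    · rintro _ ⟨x, hx, rfl⟩
      exact dist_pos.2 (zpow_ne_zero n (hC hx))
    · rintro _ ⟨x₀, hx₀, rfl⟩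
      refine ((hannulus x₀ hx₀).nagataColorableWith_image three_pos
        (h.mono (sep_subset _ _))).mono ?_
      rintro _ ⟨⟨x, hx, rfl⟩, hlog⟩
      refine mem_image_of_mem _ ⟨hx, lt_of_le_of_lt ?_ hlog⟩
      simpa only [dist_zero_right] using abs_log_norm_sub_log_norm_le_zpow hn x x₀

theorem nagataDim_image_zpow (hn : n ≠ 0) {A : Set 𝕜} (hA : A ⊆ {0}ᶜ) :
    nagataDim ((fun z => z ^ n) '' A) = nagataDim A := by
  obtain ⟨δ, hδ, hqs⟩ := exists_isQuasiSimilarityOn_zpow_ball 𝕜 hn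
  obtain ⟨S, hS, hcover, hdir⟩ := exists_finite_cover_dist_normalize_lt (E := 𝕜) (half_pos hδ)
  have hpieces {d : ℕ} (C : Set 𝕜) (hC : C ∈ S) :
      NagataColorable d ((fun z => z ^ n) '' (A ∩ C)) ↔ NagataColorable d (A ∩ C) :=
    nagataColorable_image_zpow_iff_of_dist_normalize_lt hδ hn hqs (inter_subset_left.trans hA)
      fun x hx y hy => hdir C hC x hx.2 y hy.2
  refine nagataDim_eq_of_nagataColorable_iff fun d => ⟨fun h => ?_, fun h => ?_⟩
  · have hunion : NagataColorable d (⋃₀ ((A ∩ ·) '' S)) :=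
      .sUnion (hS.image _) <| forall_mem_image.2 fun C hC =>
        (hpieces C hC).1 (h.mono (image_mono inter_subset_left))
    refine hunion.mono fun x hx => ?_
    obtain ⟨C, hC, hxC⟩ := hcover (hA hx)
    exact ⟨_, mem_image_of_mem _ hC, hx, hxC⟩
  · have hunion : NagataColorable d (⋃₀ ((fun C => (fun z => z ^ n) '' (A ∩ C)) '' S)) :=
      .sUnion (hS.image _) <| forall_mem_image.2 fun C hC =>
        (hpieces C hC).2 (h.mono inter_subset_left)
    refine hunion.mono ?_
    rintro _ ⟨x, hx, rfl⟩
    obtain ⟨C, hC, hxC⟩ := hcover (hA hx)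
    exact ⟨_, mem_image_of_mem _ hC, mem_image_of_mem _ ⟨hx, hxC⟩⟩

end Powers

section Meromorphic

open Filter

section Order

variable {𝕜 E : Type*} [NontriviallyNormedField 𝕜] [NormedAddCommGroup E] [NormedSpace 𝕜 E]

lemma exists_meromorphicOrderAt_sub_const_ne {f : 𝕜 → E} {p : 𝕜}
    (hf : MeromorphicAt f p) (hconst : ¬ EventuallyConst f (𝓝[≠] p)) :
    ∃ c : E, meromorphicOrderAt (f · - c) p ≠ 0 ∧ meromorphicOrderAt (f · - c) p ≠ ⊤ := by
  have htop (c : E) : meromorphicOrderAt (f · - c) p ≠ ⊤ := fun h =>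
    hconst (eventuallyConst_nhdsNE_iff_meromorphicOrderAt_sub_eq_top.2 ⟨c, h⟩)
  rcases lt_or_ge (meromorphicOrderAt f p) 0 with hneg | hnonneg
  · exact ⟨0, by simpa only [sub_zero] using hneg.ne, htop 0⟩
  · obtain ⟨c, hc⟩ := tendsto_nhds_of_meromorphicOrderAt_nonneg hf hnonneg
    have hc' : Tendsto (f · - c) (𝓝[≠] p) (𝓝 0) := sub_self c ▸ hc.sub_const c
    exact ⟨c, ((tendsto_zero_iff_meromorphicOrderAt_pos (hf.sub (.const c p))).1 hc').ne', htop c⟩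

lemma not_eventuallyConst_of_meromorphicOrderAt_ne {f : 𝕜 → E} {p : 𝕜}
    (hord₀ : meromorphicOrderAt f p ≠ 0) (hord : meromorphicOrderAt f p ≠ ⊤) :
    ¬ EventuallyConst f (𝓝[≠] p) := by
  classical
  intro hconst
  obtain ⟨c, hc⟩ := eventuallyConst_iff_exists_eventuallyEq.1 hconst
  have hordc := (meromorphicOrderAt_congr hc).trans (meromorphicOrderAt_const p c)
  split_ifs at hordc
  exacts [hord hordc, hord₀ hordc]

lemma meromorphicOrderAt_eq_neg_of_one_div_eq {f g : 𝕜 → 𝕜} {p : 𝕜} {n : ℕ} (hg : AnalyticAt 𝕜 g p)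
    (hgp : g p ≠ 0) (hfg : ∀ᶠ z in 𝓝[≠] p, 1 / f z = (z - p) ^ n * g z) :
    meromorphicOrderAt f p = (-n : ℤ) := by
  have hf : f =ᶠ[𝓝[≠] p] fun z => (z - p) ^ (-n : ℤ) • (g z)⁻¹ := hfg.mono fun z hz => by
    dsimp only
    rw [← one_div_one_div (f z), hz, one_div, mul_inv, zpow_neg, zpow_natCast, smul_eq_mul]
  have hginv : AnalyticAt 𝕜 (fun z => (g z)⁻¹) p := hg.inv hgp
  have hmer : MeromorphicAt f p := .congr (by fun_prop) hf.symm
  exact (meromorphicOrderAt_eq_int_iff hmer).2 ⟨_, hginv, inv_ne_zero hgp, hf⟩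

lemma meromorphicAt_and_not_eventuallyConst_of_one_div_eq {f g : 𝕜 → 𝕜} {p : 𝕜} {n : ℕ}
    (hn : n ≠ 0) (hg : AnalyticAt 𝕜 g p) (hgp : g p ≠ 0)
    (hfg : ∀ᶠ z in 𝓝[≠] p, 1 / f z = (z - p) ^ n * g z) :
    MeromorphicAt f p ∧ ¬ EventuallyConst f (𝓝[≠] p) := by
  have hord := meromorphicOrderAt_eq_neg_of_one_div_eq hg hgp hfg
  have hord₀ : meromorphicOrderAt f p ≠ 0 := by
    rw [hord, WithTop.coe_ne_zero]
    omega
  exact ⟨meromorphicAt_of_meromorphicOrderAt_ne_zero hord₀,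
    not_eventuallyConst_of_meromorphicOrderAt_ne hord₀ (hord ▸ WithTop.coe_ne_top)⟩

end Order

lemma exists_zpow_eq_of_analyticAt {E : Type*} [NormedAddCommGroup E] [NormedSpace ℂ E] {g : E → ℂ}
    {p : E} {n : ℤ} (hn : n ≠ 0) (hg : AnalyticAt ℂ g p) (hgp : g p ≠ 0) :
    ∃ k : E → ℂ, AnalyticAt ℂ k p ∧ k p ≠ 0 ∧ ∀ z, k z ^ n = g z := by
  have hpow (w : ℂ) : (w ^ (n : ℂ)⁻¹) ^ n = w := by
    rw [← Complex.cpow_mul_int, inv_mul_cancel₀ (Int.cast_ne_zero.2 hn), Complex.cpow_one]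
  -- Dividing by `g p` moves the value at `p` to `1`, away from the branch cut.
  refine ⟨fun z => g p ^ (n : ℂ)⁻¹ * (g z / g p) ^ (n : ℂ)⁻¹, ?_, ?_, fun z => ?_⟩
  · refine analyticAt_const.mul ((hg.div analyticAt_const hgp).cpow analyticAt_const ?_)
    rw [Pi.div_apply, div_self hgp]
    exact Complex.one_mem_slitPlane
  · simp [hgp]
  · rw [mul_zpow, hpow, hpow, mul_div_cancel₀ _ hgp]

variable {f : ℂ → ℂ} {p : ℂ}

lemma exists_hasStrictDerivAt_zpow_of_meromorphicOrderAt_eq {n : ℤ} (hn : n ≠ 0)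
    (hord : meromorphicOrderAt f p = n) :
    ∃ (φ : ℂ → ℂ) (φ' : ℂ), HasStrictDerivAt φ φ' p ∧ φ' ≠ 0 ∧
      ∀ᶠ z in 𝓝[≠] p, f z = φ z ^ n := by
  have hf : MeromorphicAt f p :=
    meromorphicAt_of_meromorphicOrderAt_ne_zero (by rw [hord]; exact_mod_cast hn)
  obtain ⟨g, hg, hgp, hfg⟩ := (meromorphicOrderAt_eq_int_iff hf).1 hord
  obtain ⟨k, hk, hkp, hkg⟩ := exists_zpow_eq_of_analyticAt hn hg hgp
  refine ⟨fun z => (z - p) * k z, k p, ?_, hkp, hfg.mono fun z hz => ?_⟩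
  · have hsub : HasStrictDerivAt (fun z => z - p) 1 p := (hasStrictDerivAt_id p).sub_const p
    simpa using hsub.fun_mul hk.hasStrictDerivAt
  · rw [hz, mul_zpow, hkg, smul_eq_mul]

theorem eventually_nagataDim_image_eq_of_meromorphicOrderAt_ne (hord₀ : meromorphicOrderAt f p ≠ 0)
    (hord : meromorphicOrderAt f p ≠ ⊤) :
    ∀ᶠ A in (𝓝[≠] p).smallSets, nagataDim (f '' A) = nagataDim A := by
  obtain ⟨n, hn⟩ := WithTop.ne_top_iff_exists.1 hord
  have hn₀ : n ≠ 0 := by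
    rintro rfl
    exact hord₀ hn.symm
  obtain ⟨φ, φ', hφ, hφ', hf⟩ := exists_hasStrictDerivAt_zpow_of_meromorphicOrderAt_eq hn₀ hn.symm
  obtain ⟨U, hU, hqs⟩ := exists_isQuasiSimilarityOn_of_hasStrictDerivAt hφ hφ'
  filter_upwards [eventually_smallSets_subset.2 (mem_nhdsWithin_of_mem_nhds hU),
    hf.smallSets, (hφ.hasDerivAt.eventually_ne hφ' (c := 0)).smallSets] with A hAU hfA hφA
  calc nagataDim (f '' A) = nagataDim ((fun w => w ^ n) '' (φ '' A)) := by
        rw [image_image, image_congr hfA]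
    _ = nagataDim (φ '' A) := nagataDim_image_zpow hn₀ (image_subset_iff.2 hφA)
    _ = nagataDim A := (hqs.mono hAU).nagataDim_image three_pos

theorem meromorphic_preserves_nagataDim_near_pole_general {Ω : Set ℂ} (hΩ : Ω ∈ 𝓝 p)
    (hf : MeromorphicAt f p) (hconst : ¬ EventuallyConst f (𝓝[≠] p)) :
    ∃ U : Set ℂ, IsOpen U ∧ p ∈ U ∧ U ⊆ Ω ∧
      ∀ A : Set ℂ, A ⊆ U \ {p} → nagataDim A = nagataDim (f '' A) := by
  obtain ⟨c, hc₀, hc⟩ := exists_meromorphicOrderAt_sub_const_ne hf hconst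
  obtain ⟨W, hW, hdim⟩ := eventually_smallSets.1
    (eventually_nagataDim_image_eq_of_meromorphicOrderAt_ne hc₀ hc)
  obtain ⟨V, hV, hVW⟩ := mem_nhdsWithin_iff_exists_mem_nhds_inter.1 hW
  obtain ⟨U, hUV, hU, hpU⟩ := _root_.mem_nhds_iff.1 (inter_mem hV hΩ)
  refine ⟨U, hU, hpU, hUV.trans inter_subset_right, fun A hA => ?_⟩
  have htranslate : IsQuasiSimilarityOn 1 (· - c) (f '' A) :=
    ⟨1, one_pos, fun x _ y _ => by simp⟩
  calc nagataDim A = nagataDim ((f · - c) '' A) :=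
        (hdim A fun x hx => hVW ⟨(hUV (hA hx).1).1, (hA hx).2⟩).symm
    _ = nagataDim ((· - c) '' (f '' A)) := by rw [image_image]
    _ = nagataDim (f '' A) := htranslate.nagataDim_image one_pos

end Meromorphic

/-- **Statement 16.** Near a pole `p` of a meromorphic function `f`, there is a
neighborhood `U` of `p` such that `f` preserves the Nagata dimension of every subset of
`U \ {p}`. -/
theorem meromorphic_preserves_nagataDim_near_pole (Ω : Set ℂ) (hΩo : IsOpen Ω)
    (hΩc : IsConnected Ω) (p : ℂ) (hp : p ∈ Ω) (f : ℂ → ℂ)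
    (hf : DifferentiableOn ℂ f (Ω \ {p}))
    (hpole : ∃ n : ℕ, 1 ≤ n ∧ ∃ V : Set ℂ, IsOpen V ∧ p ∈ V ∧ V ⊆ Ω ∧
      ∃ h : ℂ → ℂ, DifferentiableOn ℂ h V ∧ (∀ z ∈ V, h z ≠ 0) ∧
        ∀ z ∈ V, z ≠ p → 1 / f z = (z - p) ^ n * h z) :
    ∃ U : Set ℂ, IsOpen U ∧ p ∈ U ∧ U ⊆ Ω ∧
      ∀ A : Set ℂ, A ⊆ U \ {p} → nagataDim A = nagataDim (f '' A) := by
  obtain ⟨n, hn, V, hV, hpV, -, h, hh, hh₀, heq⟩ := hpole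
  obtain ⟨hmer, hconst⟩ := meromorphicAt_and_not_eventuallyConst_of_one_div_eq
    (Nat.one_le_iff_ne_zero.1 hn) (hh.analyticAt (hV.mem_nhds hpV)) (hh₀ p hpV) <|
      eventually_nhdsWithin_iff.2 <| (hV.eventually_mem hpV).mono heq
  exact meromorphic_preserves_nagataDim_near_pole_general (hΩo.mem_nhds hp) hmer hconst
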